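/- Let H : [0,1]×ℝ^{2n} → ℝ be a smooth time-dependent Hamiltonian with support in a fixed compact set, generating the isotopy φ_t, and assume the path is regular, i.e. sup_x H_t(x) − inf_x H_t(x) > 0 for every t. Suppose H has a fixed maximum and a fixed minimum at each moment: every s ∈ [0,1] has a closed connected neighbourhood N(s) ⊆ [0,1] and points P_s, p_s ∈ ℝ^{2n} such that H_t(P_s) = sup_x H_t(x) and H_t(p_s) = inf_x H_t(x) for all t ∈ N(s). Then φ_t is a geodesic of the Hofer length: every s ∈ [0,1] has a closed connected neighbourhood [a,b] ⊆ [0,1] on which the path is a stable geodesic, meaning that for every smooth family K^u, u ∈ (−1,1), of time-dependent Hamiltonians on [a,b]×ℝ^{2n}, with supports in a fixed compact set, with K^0 = H restricted to [a,b], and whose generated isotopies ψ^u_t (solving ψ^u_a = φ_a, (d/dt)ψ^u_t = X_{K^u_t}∘ψ^u_t) all satisfy ψ^u_b = φ_b, there is δ > 0 such that ∫_a^b (sup_x K^u_t(x) − inf_x K^u_t(x)) dt ≥ ∫_a^b (sup_x H_t(x) − inf_x H_t(x)) dt whenever |u| < δ. -/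

import Mathlib

/-!
On `ℝ^{2n}` a sufficiently short piece of a Hamiltonian path is described by its generating function,
and the Hamilton–Jacobi equation bounds that function by the integrals of `sup` and `inf`.

Fix `[a, b]` so short that the flows `g_t` of `H` and of `K u` (`|u|` small), started from the identity
at time `a`, differ from the identity by half-Lipschitz maps. For a trajectory `γ` put
`A(t, γ) = ∫ₐᵗ (K_s(γ_s) - ½ ω₀(γ_s, γ_s')) ds`. Comparing two trajectories
(`Good.first_variation`), the difference of actions is
`-½ [ω₀(γ_t, γ'_t) - ω₀(γ_a, γ'_a)]` up to an error quadratic in the distance of the initial points.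
Two consequences need no differentiability of the flow in the initial point, because a function with
quadratically small increments is constant (`eq_of_quadratic`).

* If two flows agree at time `b`, their actions `A(b, ·)` differ by a constant, which is `0` because
  both vanish outside a compact set (`action_eq`).
* Fix `Q`, let `z_t` be the point with `z_t + g_t(z_t) = 2 Q` (a contraction argument), and let
  `S_t = A(t, g z_t) + ½ ω₀(z_t, g_t z_t)` be the midpoint generating function. Then
  `dS_t/dt = K_t(g_t z_t)`. If `g_b Q = Q` then `z_b = Q`, so the action of the trajectory of `Q` is
  `∫ₐᵇ K_t(g_t z_t) dt` (`exists_path`).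

Let `P` be the fixed maximum of `H_t`. It is a critical point, so it does not move, and its action for
`H` is `∫ sup H_t`. By the first point this is its action for `K u`, which by the second point is at
most `∫ sup K u t`. The same argument at the fixed minimum `p` bounds the infima.
-/

open Set

noncomputable section

/-- `ℝ^{2n}`, written as pairs consisting of the `n` x-coordinates and the `n` y-coordinates. -/
abbrev Esp (n : ℕ) : Type := (Fin n → ℝ) × (Fin n → ℝ)

/-- The standard symplectic form `ω₀ = Σ dxᵢ ∧ dyᵢ` on `ℝ^{2n}`. -/
def omega0 {n : ℕ} (v w : Esp n) : ℝ := ∑ i, (v.1 i * w.2 i - v.2 i * w.1 i)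

/-- The Hamiltonian vector field `X_H = J ∇H`, i.e. `X_H = (-∂H/∂y, ∂H/∂x)`. -/
def hamVF {n : ℕ} (H : Esp n → ℝ) (p : Esp n) : Esp n :=
  (fun i => - (fderiv ℝ H p) (0, Pi.single i 1),
   fun i => (fderiv ℝ H p) (Pi.single i 1, 0))

/-- Total variation `sup H - inf H`. -/
def totVar {n : ℕ} (F : Esp n → ℝ) : ℝ := sSup (Set.range F) - sInf (Set.range F)

/-- Hofer length `L(H) = ∫₀¹ (sup_x H_t - inf_x H_t) dt`. -/
def hoferLength {n : ℕ} (H : ℝ → Esp n → ℝ) : ℝ := ∫ t in (0:ℝ)..1, totVar (H t)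

/-- Support of a time-dependent Hamiltonian lies in a fixed compact set. -/
def IsCompactlySupported {n : ℕ} (H : ℝ → Esp n → ℝ) : Prop :=
  ∃ C : Set (Esp n), IsCompact C ∧ ∀ t x, x ∉ C → H t x = 0

/-- `φ` is the Hamiltonian isotopy generated by `H`. -/
def IsHamIsotopyOf {n : ℕ} (H : ℝ → Esp n → ℝ) (φ : ℝ → Esp n → Esp n) : Prop :=
  (∀ x, φ 0 x = x) ∧ ∀ x t, HasDerivAt (fun s => φ s x) (hamVF (H t) (φ t x)) t


namespace HoferGeodesic

/-! ### The symplectic form and two elementary analytic facts -/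

variable {n : ℕ}

open NNReal

lemma abs_omega0_le (v w : Esp n) : |omega0 v w| ≤ 2 * n * ‖v‖ * ‖w‖ := by
  have key : ∀ i : Fin n, |v.1 i * w.2 i - v.2 i * w.1 i| ≤ 2 * ‖v‖ * ‖w‖ := by
    intro i
    have h1 : |v.1 i| ≤ ‖v‖ := (norm_le_pi_norm v.1 i).trans (norm_fst_le v)
    have h2 : |v.2 i| ≤ ‖v‖ := (norm_le_pi_norm v.2 i).trans (norm_snd_le v)
    have h3 : |w.1 i| ≤ ‖w‖ := (norm_le_pi_norm w.1 i).trans (norm_fst_le w)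
    have h4 : |w.2 i| ≤ ‖w‖ := (norm_le_pi_norm w.2 i).trans (norm_snd_le w)
    calc |v.1 i * w.2 i - v.2 i * w.1 i| ≤ |v.1 i * w.2 i| + |v.2 i * w.1 i| := abs_sub _ _
      _ = |v.1 i| * |w.2 i| + |v.2 i| * |w.1 i| := by rw [abs_mul, abs_mul]
      _ ≤ ‖v‖ * ‖w‖ + ‖v‖ * ‖w‖ := by gcongr
      _ = _ := by ring
  calc |omega0 v w| ≤ ∑ i : Fin n, |v.1 i * w.2 i - v.2 i * w.1 i| :=
        Finset.abs_sum_le_sum_abs _ _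
    _ ≤ ∑ _i : Fin n, 2 * ‖v‖ * ‖w‖ := Finset.sum_le_sum fun i _ => key i
    _ = _ := by simp; ring

/-- The symplectic form `omega0` as a continuous bilinear map. -/
def omegaL (n : ℕ) : Esp n →L[ℝ] Esp n →L[ℝ] ℝ :=
  LinearMap.mkContinuous₂
    (LinearMap.mk₂ ℝ (omega0 (n := n))
      (fun a b c => by
        simp only [omega0, ← Finset.sum_add_distrib, Prod.fst_add, Prod.snd_add, Pi.add_apply]
        exact Finset.sum_congr rfl fun i _ => by ring)
      (fun r a c => by
        simp only [omega0, Finset.mul_sum, Prod.smul_fst, Prod.smul_snd, Pi.smul_apply,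
          smul_eq_mul]
        exact Finset.sum_congr rfl fun i _ => by ring)
      (fun a b c => by
        simp only [omega0, ← Finset.sum_add_distrib, Prod.fst_add, Prod.snd_add, Pi.add_apply]
        exact Finset.sum_congr rfl fun i _ => by ring)
      (fun r a c => by
        simp only [omega0, Finset.mul_sum, Prod.smul_fst, Prod.smul_snd, Pi.smul_apply,
          smul_eq_mul]
        exact Finset.sum_congr rfl fun i _ => by ring))
    (2 * n) abs_omega0_le

lemma omegaL_apply (v w : Esp n) : omegaL n v w = omega0 v w := rfl

lemma abs_omegaL_le (v w : Esp n) : |omegaL n v w| ≤ 2 * n * ‖v‖ * ‖w‖ := abs_omega0_le v w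

lemma omegaL_swap (v w : Esp n) : omegaL n v w = - omegaL n w v := by
  simp only [omegaL_apply, omega0, ← Finset.sum_neg_distrib]
  exact Finset.sum_congr rfl fun i _ => by ring

lemma omegaL_self (v : Esp n) : omegaL n v v = 0 := by
  have := omegaL_swap v v
  linarith

/-- Hamilton's equation `dH(h) = ω₀(h, X_H)`. -/
lemma fderiv_eq_omegaL (F : Esp n → ℝ) (x h : Esp n) :
    fderiv ℝ F x h = omegaL n h (hamVF F x) := by
  have hd : h = ∑ i, (h.1 i • ((Pi.single i 1, 0) : Esp n) + h.2 i • ((0, Pi.single i 1) : Esp n)) := by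
    ext j
    · simp [Prod.fst_sum, Finset.sum_apply, Pi.single_apply]
    · simp [Prod.snd_sum, Finset.sum_apply, Pi.single_apply]
  conv_lhs => rw [hd]
  rw [map_sum, omegaL_apply, omega0]
  refine Finset.sum_congr rfl fun i _ => ?_
  simp only [map_add, map_smul, hamVF, smul_eq_mul]
  ring

/-- A map whose increments are quadratically small is constant. -/
lemma eq_of_quadratic {E : Type*} [NormedAddCommGroup E] [NormedSpace ℝ E] (G : E → ℝ) (C : ℝ)
    (h : ∀ x y, |G y - G x| ≤ C * ‖y - x‖ ^ 2) (x y : E) : G x = G y := by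
  have hd : ∀ x, HasFDerivAt G (0 : E →L[ℝ] ℝ) x := by
    intro x
    have h0 : HasFDerivAt (fun y => G y - G x) (0 : E →L[ℝ] ℝ) x := by
      refine Asymptotics.IsBigO.hasFDerivAt (n := 2) ?_ one_lt_two
      refine Asymptotics.IsBigO.of_bound C (Filter.Eventually.of_forall fun y => ?_)
      simpa using h x y
    simpa using h0.add_const (G x)
  exact is_const_of_fderiv_eq_zero (𝕜 := ℝ) (fun x => (hd x).differentiableAt)
    (fun x => (hd x).fderiv) x y

/-- A half-Lipschitz perturbation of the identity is onto. -/
lemma exists_add_eq {E : Type*} [NormedAddCommGroup E] [CompleteSpace E]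
    (e : E → E) (he : ∀ x y, ‖e x - e y‖ ≤ 1 / 2 * ‖x - y‖) (w : E) : ∃ z, z + e z = w := by
  have hc : ContractingWith (1 / 2 : ℝ≥0) (fun z => w - e z) := by
    refine ⟨by rw [← NNReal.coe_lt_coe]; norm_num, LipschitzWith.of_dist_le_mul fun x y => ?_⟩
    rw [dist_eq_norm, dist_eq_norm]
    have := he y x
    rw [norm_sub_rev y x] at this
    simpa using this
  refine ⟨ContractingWith.fixedPoint _ hc, ?_⟩
  have := hc.fixedPoint_isFixedPt
  unfold Function.IsFixedPt at this
  nth_rewrite 1 [← this]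
  simp

/-! ### Integral curves over short intervals -/

section Trajectories

variable {K : ℝ → Esp n → ℝ} {a b : ℝ} {L : ℝ≥0} {γ γ' : ℝ → Esp n}

/-- `γ` is an integral curve of the time-dependent Hamiltonian vector field of `K`. -/
def IsTraj (K : ℝ → Esp n → ℝ) (γ : ℝ → Esp n) : Prop :=
  ∀ t, HasDerivAt γ (hamVF (K t) (γ t)) t

lemma IsTraj.continuous (h : IsTraj K γ) : Continuous γ :=
  continuous_iff_continuousAt.2 fun t => (h t).continuousAt

/-- Grönwall estimate on an interval so short that the exponential factor is at most `2`. -/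
lemma traj_dist (hL : ∀ t ∈ Icc a b, LipschitzWith L (hamVF (K t))) (hab : L * (b - a) ≤ 1 / 4)
    (h : IsTraj K γ) (h' : IsTraj K γ') {t : ℝ} (ht : t ∈ Icc a b) :
    ‖γ' t - γ t‖ ≤ 2 * ‖γ' a - γ a‖ := by
  have := dist_le_of_trajectories_ODE_of_mem (v := fun t => hamVF (K t)) (s := fun _ => univ)
    (f := γ') (g := γ) (a := a) (b := b) (K := L)
    (fun t ht => (hL t (Ico_subset_Icc_self ht)).lipschitzOnWith) h'.continuous.continuousOn
    (fun t _ => (h' t).hasDerivWithinAt) (fun _ _ => mem_univ _) h.continuous.continuousOn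
    (fun t _ => (h t).hasDerivWithinAt) (fun _ _ => mem_univ _) le_rfl t ht
  rw [dist_eq_norm, dist_eq_norm, mul_comm] at this
  refine this.trans ?_
  gcongr
  have h1 : (L : ℝ) * (t - a) ≤ 1 / 4 := by
    refine le_trans ?_ hab
    have := ht.2
    gcongr
  have h2 : Real.exp (1 / 4) ≤ 2 := by
    have h3 : Real.exp (1 / 4) ^ 4 = Real.exp 1 := by
      rw [← Real.exp_nat_mul]; norm_num
    by_contra hcon
    push Not at hcon
    have h4 : (2 : ℝ) ^ 4 < Real.exp (1 / 4) ^ 4 := by gcongr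
    have := Real.exp_one_lt_d9
    rw [h3] at h4
    norm_num at h4
    linarith
  exact (Real.exp_le_exp.2 h1).trans h2

/-- On a short interval the flow differs from the identity by a half-Lipschitz map. -/
lemma traj_disp (hL : ∀ t ∈ Icc a b, LipschitzWith L (hamVF (K t))) (hab : L * (b - a) ≤ 1 / 4)
    (h : IsTraj K γ) (h' : IsTraj K γ') {t : ℝ} (ht : t ∈ Icc a b) :
    ‖(γ' t - γ' a) - (γ t - γ a)‖ ≤ 1 / 2 * ‖γ' a - γ a‖ := by
  have key := norm_image_sub_le_of_norm_deriv_le_segment' (f := fun s => γ' s - γ s)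
    (f' := fun s => hamVF (K s) (γ' s) - hamVF (K s) (γ s)) (a := a) (b := b)
    (C := L * (2 * ‖γ' a - γ a‖)) (fun s _ => ((h' s).sub (h s)).hasDerivWithinAt)
    (fun s hs => by
      have hs' := Ico_subset_Icc_self hs
      calc _ ≤ L * ‖γ' s - γ s‖ := by
            have := (hL s hs').dist_le_mul (γ' s) (γ s)
            rwa [dist_eq_norm, dist_eq_norm] at this
        _ ≤ _ := by gcongr; exact traj_dist hL hab h h' hs') t ht
  have e : (γ' t - γ' a) - (γ t - γ a) = (γ' t - γ t) - (γ' a - γ a) := by abel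
  rw [e]
  refine key.trans ?_
  have h1 : (L : ℝ) * (t - a) ≤ 1 / 4 := by
    refine le_trans ?_ hab
    have := ht.2
    gcongr
  nlinarith [norm_nonneg (γ' a - γ a)]

/-- If the positions at time `a` of a family of trajectories fill the space, so do the positions at
time `b`, provided `[a, b]` is short. -/
lemma surj_step (hL : ∀ t ∈ Icc a b, LipschitzWith L (hamVF (K t))) (hab : L * (b - a) ≤ 1 / 4)
    (hle : a ≤ b) {ψ : ℝ → Esp n → Esp n} (hψ : ∀ x, IsTraj K fun t => ψ t x)
    (hs : Function.Surjective (ψ a)) : Function.Surjective (ψ b) := by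
  intro w
  choose σ hσ using hs
  obtain ⟨z, hz⟩ := exists_add_eq (fun z => ψ b (σ z) - z) (fun x y => by
    have := traj_disp hL hab (hψ (σ y)) (hψ (σ x)) (right_mem_Icc.2 hle)
    simpa [hσ] using this) w
  exact ⟨σ z, by simpa using hz⟩

/-- The time-`c` map of a flow with uniformly Lipschitz vector field is onto, by subdividing `[0, c]`
into short intervals. -/
lemma surj_flow {c : ℝ} (hL : ∀ t ∈ Icc 0 c, LipschitzWith L (hamVF (K t)))
    (hc : 0 ≤ c) {ψ : ℝ → Esp n → Esp n} (hψ : ∀ x, IsTraj K fun t => ψ t x)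
    (hs : ∀ x, ψ 0 x = x) : Function.Surjective (ψ c) := by
  obtain ⟨N, hN⟩ := exists_nat_gt (4 * (L * c))
  have hN0 : (0 : ℝ) < N := lt_of_le_of_lt (by positivity) hN
  have key : ∀ k : ℕ, k ≤ N → Function.Surjective (ψ (k * (c / N))) := by
    intro k
    induction k with
    | zero => intro _ x; exact ⟨x, by simpa using hs x⟩
    | succ k ih =>
      intro hk
      have hk' : ((k : ℝ) + 1) ≤ N := by exact_mod_cast hk
      have hcN : 0 ≤ c / N := by positivity
      refine surj_step (L := L) (a := k * (c / N)) (fun t ht => hL t ⟨?_, ?_⟩) ?_ ?_ hψ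
        (ih (by omega))
      · exact le_trans (by positivity) ht.1
      · refine ht.2.trans ?_
        push_cast
        calc ((k : ℝ) + 1) * (c / N) ≤ N * (c / N) := by gcongr
          _ = c := by field_simp
      · push_cast
        have : (L : ℝ) * (((k : ℝ) + 1) * (c / N) - k * (c / N)) = L * c / N := by ring
        rw [this, div_le_iff₀ hN0]
        linarith
      · push_cast; linarith
  have := key N le_rfl
  rwa [mul_div_cancel₀ _ hN0.ne'] at this

end Trajectories

/-! ### The action and its first variation -/

section Action

/-- Uniform regularity on `[a, b]` of a time-dependent Hamiltonian: its vector field is bounded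
and `L`-Lipschitz in space, everything is continuous, and the support is compact. -/
structure Good (K : ℝ → Esp n → ℝ) (a b : ℝ) (L : ℝ≥0) : Prop where
  cont : Continuous fun q : ℝ × Esp n => K q.1 q.2
  contX : Continuous fun q : ℝ × Esp n => hamVF (K q.1) q.2
  diff : ∀ t, Differentiable ℝ (K t)
  lip : ∀ t ∈ Icc a b, LipschitzWith L (hamVF (K t))
  bdd : ∃ B : ℝ, ∀ t ∈ Icc a b, ∀ x, ‖hamVF (K t) x‖ ≤ B
  supp : IsCompactlySupported K

/-- The symplectic action `∫ₐᵗ (K_s(γ_s) - ½ ω₀(γ_s, X_s(γ_s))) ds` of an integral curve. -/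
def action (K : ℝ → Esp n → ℝ) (γ : ℝ → Esp n) (a t : ℝ) : ℝ :=
  ∫ s in a..t, (K s (γ s) - 1 / 2 * omegaL n (γ s) (hamVF (K s) (γ s)))

variable {K : ℝ → Esp n → ℝ} {a b : ℝ} {L : ℝ≥0} {γ γ' : ℝ → Esp n}

lemma Good.continuous_comp (hK : Good K a b L) (hγ : Continuous γ) :
    Continuous fun s => K s (γ s) :=
  hK.cont.comp (continuous_id.prodMk hγ)

lemma Good.continuous_X_comp (hK : Good K a b L) (hγ : Continuous γ) :
    Continuous fun s => hamVF (K s) (γ s) :=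
  hK.contX.comp (continuous_id.prodMk hγ)

lemma Good.hasDerivAt_action (hK : Good K a b L) (hγ : Continuous γ) (t : ℝ) :
    HasDerivAt (action K γ a) (K t (γ t) - 1 / 2 * omegaL n (γ t) (hamVF (K t) (γ t))) t := by
  have hc : Continuous fun s => K s (γ s) - 1 / 2 * omegaL n (γ s) (hamVF (K s) (γ s)) :=
    (hK.continuous_comp hγ).sub (continuous_const.mul
      ((omegaL n).continuous.comp hγ |>.clm_apply (hK.continuous_X_comp hγ)))
  exact (hc.integral_hasStrictDerivAt a t).hasDerivAt

lemma hasDerivAt_omegaL {u v : ℝ → Esp n} {u' v' : Esp n} {t : ℝ} (hu : HasDerivAt u u' t)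
    (hv : HasDerivAt v v' t) :
    HasDerivAt (fun s => omegaL n (u s) (v s)) (omegaL n u' (v t) + omegaL n (u t) v') t :=
  ((omegaL n).hasFDerivAt.comp_hasDerivAt t hu).clm_apply hv

lemma Good.abs_sub_le (hK : Good K a b L) {B : ℝ} (hB : ∀ t ∈ Icc a b, ∀ x, ‖hamVF (K t) x‖ ≤ B)
    {t : ℝ} (ht : t ∈ Icc a b) (x y : Esp n) : |K t y - K t x| ≤ 2 * n * B * ‖y - x‖ := by
  have hB0 : 0 ≤ B := (norm_nonneg _).trans (hB t ht x)
  refine Convex.norm_image_sub_le_of_norm_fderiv_le (𝕜 := ℝ) (s := univ)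
    (fun z _ => hK.diff t z) (fun z _ => ?_) convex_univ (mem_univ _) (mem_univ _)
  refine ContinuousLinearMap.opNorm_le_bound _ (by positivity) fun h => ?_
  rw [fderiv_eq_omegaL, Real.norm_eq_abs]
  refine (abs_omegaL_le _ _).trans ?_
  calc 2 * n * ‖h‖ * ‖hamVF (K t) z‖ ≤ 2 * n * ‖h‖ * B := by gcongr; exact hB t ht z
    _ = _ := by ring

/-- First-order Taylor estimate for `K t`. -/
lemma Good.taylor (hK : Good K a b L) {t : ℝ} (ht : t ∈ Icc a b) (x y : Esp n) :
    |K t y - K t x - omegaL n (y - x) (hamVF (K t) x)| ≤ 2 * n * L * ‖y - x‖ ^ 2 := by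
  have key := Convex.norm_image_sub_le_of_norm_fderiv_le' (𝕜 := ℝ) (f := K t)
    (s := Metric.closedBall x ‖y - x‖) (φ := fderiv ℝ (K t) x) (C := 2 * n * L * ‖y - x‖)
    (x := x) (y := y) (fun z _ => hK.diff t z) (fun z hz => by
      refine ContinuousLinearMap.opNorm_le_bound _ (by positivity) fun h => ?_
      rw [sub_apply, fderiv_eq_omegaL, fderiv_eq_omegaL, ← map_sub,
        Real.norm_eq_abs]
      refine (abs_omegaL_le _ _).trans ?_
      have h1 : ‖hamVF (K t) z - hamVF (K t) x‖ ≤ L * ‖z - x‖ := by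
        have := (hK.lip t ht).dist_le_mul z x
        rwa [dist_eq_norm, dist_eq_norm] at this
      have h2 : ‖z - x‖ ≤ ‖y - x‖ := by simpa [dist_eq_norm] using hz
      calc 2 * n * ‖h‖ * ‖hamVF (K t) z - hamVF (K t) x‖
          ≤ 2 * n * ‖h‖ * (L * ‖y - x‖) := by gcongr; exact h1.trans (by gcongr)
        _ = _ := by ring)
    (convex_closedBall _ _) (Metric.mem_closedBall_self (norm_nonneg _))
    (by simp [dist_eq_norm])
  rw [fderiv_eq_omegaL, Real.norm_eq_abs] at key
  refine key.trans_eq ?_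
  ring

/-- First variation of the action among integral curves: up to a quadratic error only the
boundary term `-½ ω₀(γ, γ')` survives. -/
lemma Good.first_variation (hK : Good K a b L) (hab : L * (b - a) ≤ 1 / 4) (h : IsTraj K γ)
    (h' : IsTraj K γ') {t : ℝ} (ht : t ∈ Icc a b) :
    |action K γ' a t - action K γ a t
      + 1 / 2 * (omegaL n (γ t) (γ' t) - omegaL n (γ a) (γ' a))|
      ≤ 12 * n * L * (b - a) * ‖γ' a - γ a‖ ^ 2 := by
  have key := norm_image_sub_le_of_norm_deriv_le_segment'
    (f := fun s => action K γ' a s - action K γ a s + 1 / 2 * omegaL n (γ s) (γ' s))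
    (f' := fun s => (K s (γ' s) - 1 / 2 * omegaL n (γ' s) (hamVF (K s) (γ' s)))
      - (K s (γ s) - 1 / 2 * omegaL n (γ s) (hamVF (K s) (γ s)))
      + 1 / 2 * (omegaL n (hamVF (K s) (γ s)) (γ' s) + omegaL n (γ s) (hamVF (K s) (γ' s))))
    (a := a) (b := b) (C := 12 * n * L * ‖γ' a - γ a‖ ^ 2)
    (fun s _ => (((hK.hasDerivAt_action h'.continuous s).sub
      (hK.hasDerivAt_action h.continuous s)).add
        ((hasDerivAt_omegaL (h s) (h' s)).const_mul _)).hasDerivWithinAt)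
    (fun s hs => by
      have hs' := Ico_subset_Icc_self hs
      have e : (K s (γ' s) - 1 / 2 * omegaL n (γ' s) (hamVF (K s) (γ' s)))
          - (K s (γ s) - 1 / 2 * omegaL n (γ s) (hamVF (K s) (γ s)))
          + 1 / 2 * (omegaL n (hamVF (K s) (γ s)) (γ' s) + omegaL n (γ s) (hamVF (K s) (γ' s)))
          = (K s (γ' s) - K s (γ s) - omegaL n (γ' s - γ s) (hamVF (K s) (γ s)))
            - 1 / 2 * omegaL n (γ' s - γ s) (hamVF (K s) (γ' s) - hamVF (K s) (γ s)) := by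
        rw [omegaL_swap (hamVF (K s) (γ s)) (γ' s)]
        simp only [map_sub, sub_apply]
        ring
      have h1 := hK.taylor hs' (γ s) (γ' s)
      have h2 : |omegaL n (γ' s - γ s) (hamVF (K s) (γ' s) - hamVF (K s) (γ s))|
          ≤ 2 * n * L * ‖γ' s - γ s‖ ^ 2 := by
        refine (abs_omegaL_le _ _).trans ?_
        have := (hK.lip s hs').dist_le_mul (γ' s) (γ s)
        rw [dist_eq_norm, dist_eq_norm] at this
        calc _ ≤ 2 * n * ‖γ' s - γ s‖ * (L * ‖γ' s - γ s‖) := by gcongr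
          _ = _ := by ring
      rw [e, Real.norm_eq_abs]
      calc _ ≤ |K s (γ' s) - K s (γ s) - omegaL n (γ' s - γ s) (hamVF (K s) (γ s))|
            + |1 / 2 * omegaL n (γ' s - γ s) (hamVF (K s) (γ' s) - hamVF (K s) (γ s))| :=
              abs_sub _ _
        _ ≤ 3 * n * L * ‖γ' s - γ s‖ ^ 2 := by
              rw [abs_mul, abs_of_pos (by norm_num : (0:ℝ) < 1 / 2)]; linarith
        _ ≤ 3 * n * L * (2 * ‖γ' a - γ a‖) ^ 2 := by
              gcongr; exact traj_dist hK.lip hab h h' hs'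
        _ = _ := by ring) t ht
  have e : action K γ' a t - action K γ a t
      + 1 / 2 * (omegaL n (γ t) (γ' t) - omegaL n (γ a) (γ' a))
      = (action K γ' a t - action K γ a t + 1 / 2 * omegaL n (γ t) (γ' t))
        - (action K γ' a a - action K γ a a + 1 / 2 * omegaL n (γ a) (γ' a)) := by
    simp only [action, intervalIntegral.integral_same]; ring
  rw [e, ← Real.norm_eq_abs]
  refine key.trans ?_
  have := ht.2
  calc _ ≤ 12 * n * L * ‖γ' a - γ a‖ ^ 2 * (b - a) := by gcongr
    _ = _ := by ring

/-- A critical point of every `K t`, `t ∈ [a, b]`, does not move. -/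
lemma Good.traj_const (hK : Good K a b L) (h : IsTraj K γ)
    (h0 : ∀ t ∈ Icc a b, hamVF (K t) (γ a) = 0) {t : ℝ} (ht : t ∈ Icc a b) : γ t = γ a := by
  have := dist_le_of_trajectories_ODE_of_mem (v := fun t => hamVF (K t)) (s := fun _ => univ)
    (f := γ) (g := fun _ => γ a) (a := a) (b := b) (K := L) (δ := 0)
    (fun t ht => (hK.lip t (Ico_subset_Icc_self ht)).lipschitzOnWith) h.continuous.continuousOn
    (fun t _ => (h t).hasDerivWithinAt) (fun _ _ => mem_univ _) continuous_const.continuousOn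
    (fun t ht => by
      rw [h0 t (Ico_subset_Icc_self ht)]
      exact hasDerivWithinAt_const _ _ _) (fun _ _ => mem_univ _) (by simp) t ht
  simpa using this

lemma hamVF_eq_zero {F : Esp n → ℝ} {x : Esp n} (h : fderiv ℝ F x = 0) : hamVF F x = 0 := by
  ext i <;> simp [hamVF, h]

lemma hamVF_eq_zero_of_notMem {F : Esp n → ℝ} {C : Set (Esp n)} (hC : IsClosed C)
    (h : ∀ x, x ∉ C → F x = 0) {x : Esp n} (hx : x ∉ C) : hamVF F x = 0 := by
  apply hamVF_eq_zero
  have : F =ᶠ[nhds x] fun _ => 0 := by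
    filter_upwards [hC.isOpen_compl.mem_nhds hx] with y hy using h y hy
  rw [this.fderiv_eq]
  simp

lemma exists_notMem (hn : 0 < n) {C : Set (Esp n)} (hC : IsCompact C) : ∃ z, z ∉ C := by
  have : Nonempty (Fin n) := ⟨⟨0, hn⟩⟩
  by_contra! hcon
  have := NormedSpace.noncompactSpace ℝ (Esp n)
  exact hC.ne_univ (eq_univ_of_forall hcon)

variable {K' : ℝ → Esp n → ℝ} {g g' : ℝ → Esp n → Esp n}

/-- The action of the trajectories over `[a, b]` depends only on the time-`b` map: the two actions
have the same first variation, and both vanish near infinity. -/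
lemma action_eq (hn : 0 < n) (hle : a ≤ b) (hK : Good K a b L) (hK' : Good K' a b L)
    (hab : L * (b - a) ≤ 1 / 4)
    (hg : ∀ z, IsTraj K fun t => g t z) (hg' : ∀ z, IsTraj K' fun t => g' t z)
    (hga : ∀ z, g a z = z) (hga' : ∀ z, g' a z = z) (hgb : ∀ z, g b z = g' b z) (z : Esp n) :
    action K (fun t => g t z) a b = action K' (fun t => g' t z) a b := by
  have hb : b ∈ Icc a b := right_mem_Icc.2 hle
  have hconst := eq_of_quadratic
    (fun z => action K (fun t => g t z) a b - action K' (fun t => g' t z) a b)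
    (24 * n * L * (b - a)) (fun x y => by
      have h1 := hK.first_variation hab (hg x) (hg y) hb
      have h2 := hK'.first_variation hab (hg' x) (hg' y) hb
      simp only [hga, hga', hgb] at h1 h2
      rw [abs_le] at *
      constructor <;> linarith [h1.1, h1.2, h2.1, h2.2])
  obtain ⟨C, hC, hCz⟩ := hK.supp
  obtain ⟨C', hC', hCz'⟩ := hK'.supp
  obtain ⟨z₀, hz₀⟩ := exists_notMem hn (hC.union hC')
  rw [mem_union, not_or] at hz₀
  have zero : ∀ {K : ℝ → Esp n → ℝ} {g : ℝ → Esp n → Esp n} {C : Set (Esp n)}, Good K a b L →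
      (∀ z, IsTraj K fun t => g t z) → (∀ z, g a z = z) → IsCompact C →
      (∀ t x, x ∉ C → K t x = 0) → z₀ ∉ C → action K (fun t => g t z₀) a b = 0 := by
    intro K g C hK hg hga hC hCz hz
    have hX : ∀ t, hamVF (K t) z₀ = 0 := fun t =>
      hamVF_eq_zero_of_notMem hC.isClosed (hCz t) hz
    have hc : ∀ t ∈ Icc a b, g t z₀ = z₀ := fun t ht => by
      have := hK.traj_const (hg z₀) (fun t _ => by simpa [hga] using hX t) ht
      simpa [hga] using this
    unfold action
    rw [intervalIntegral.integral_congr (g := fun _ => 0) (fun t ht => ?_)]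
    · simp
    · rw [uIcc_of_le hle] at ht
      simp [hc t ht, hX, hCz t z₀ hz]
  have h0 := hconst z z₀
  rw [zero hK hg hga hC hCz hz₀.1, zero hK' hg' hga' hC' hCz' hz₀.2] at h0
  linarith

end Action

/-! ### The generating function and the Hamilton–Jacobi equation -/

section HamiltonJacobi

variable {K : ℝ → Esp n → ℝ} {a b : ℝ} {L : ℝ≥0} {g : ℝ → Esp n → Esp n}

lemma traj_speed {B : ℝ} (hB : ∀ t ∈ Icc a b, ∀ x, ‖hamVF (K t) x‖ ≤ B) {γ : ℝ → Esp n}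
    (h : IsTraj K γ) {t s : ℝ} (ht : t ∈ Icc a b) (hs : s ∈ Icc a b) :
    ‖γ t - γ s‖ ≤ B * |t - s| :=
  Convex.norm_image_sub_le_of_norm_hasDerivWithin_le (fun r _ => (h r).hasDerivWithinAt)
    (fun r hr => hB r hr _) (convex_Icc a b) hs ht

/-- For each `t ∈ [a, b]` there is a trajectory over `[a, t]` whose endpoints have midpoint
`Q`; its initial point `z t` can be chosen Lipschitz in `t`. -/
lemma exists_midpoint (hK : Good K a b L) (hle : a ≤ b) (hab : L * (b - a) ≤ 1 / 4)
    (hg : ∀ z, IsTraj K fun t => g t z) (hga : ∀ z, g a z = z) {B : ℝ}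
    (hB : ∀ t ∈ Icc a b, ∀ x, ‖hamVF (K t) x‖ ≤ B) (Q : Esp n) :
    ∃ z : ℝ → Esp n, (∀ t s, ‖z t - z s‖ ≤ B * |t - s|) ∧
      ∀ t ∈ Icc a b, z t + g t (z t) = (2 : ℝ) • Q := by
  have hdisp : ∀ t ∈ Icc a b, ∀ x y, ‖(g t x - x) - (g t y - y)‖ ≤ 1 / 2 * ‖x - y‖ := by
    intro t ht x y
    have := traj_disp hK.lip hab (hg y) (hg x) ht
    simpa [hga] using this
  have hex : ∀ t : Icc a b, ∃ z, z + g t z = (2 : ℝ) • Q := by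
    intro t
    obtain ⟨z, hz⟩ := exists_add_eq (fun z => (1 / 2 : ℝ) • (g t z - z)) (fun x y => by
      rw [← smul_sub, norm_smul, Real.norm_of_nonneg (by norm_num)]
      have := hdisp t t.2 x y
      have := norm_nonneg (x - y)
      linarith) Q
    refine ⟨z, ?_⟩
    rw [← hz]
    module
  choose ζ hζ using hex
  have hspeed : ∀ t ∈ Icc a b, ∀ s ∈ Icc a b, ∀ x, ‖g t x - g s x‖ ≤ B * |t - s| :=
    fun t ht s hs x => traj_speed hB (hg x) ht hs
  have hζL : ∀ t s : Icc a b, ‖ζ t - ζ s‖ ≤ B * |(t : ℝ) - s| := by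
    intro t s
    have h1 := hdisp t t.2 (ζ t) (ζ s)
    have h2 := hspeed t t.2 s s.2 (ζ s)
    have e : (2 : ℝ) • (ζ t - ζ s)
        = -(((g t (ζ t) - ζ t) - (g t (ζ s) - ζ s)) + (g t (ζ s) - g s (ζ s))) := by
      have h3 : g t (ζ t) = (2 : ℝ) • Q - ζ t := eq_sub_of_add_eq' (hζ t)
      have h4 : g s (ζ s) = (2 : ℝ) • Q - ζ s := eq_sub_of_add_eq' (hζ s)
      rw [h3, h4]
      module
    have h5 : 2 * ‖ζ t - ζ s‖ ≤ 1 / 2 * ‖ζ t - ζ s‖ + B * |(t : ℝ) - s| := by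
      calc 2 * ‖ζ t - ζ s‖ = ‖(2 : ℝ) • (ζ t - ζ s)‖ := by
            rw [norm_smul, Real.norm_of_nonneg (by norm_num)]
        _ ≤ _ := by
            rw [e, norm_neg]
            exact (norm_add_le _ _).trans (add_le_add h1 h2)
    have := norm_nonneg (ζ t - ζ s)
    linarith
  have hB0 : 0 ≤ B := (norm_nonneg _).trans (hB a (left_mem_Icc.2 hle) 0)
  refine ⟨fun t => ζ (projIcc a b hle t), fun t s => (hζL _ _).trans ?_, fun t ht => ?_⟩
  · exact mul_le_mul_of_nonneg_left (abs_projIcc_sub_projIcc hle) hB0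
  · have := hζ (projIcc a b hle t)
    simpa only [projIcc_of_mem hle ht] using this

/-- The Hamilton–Jacobi equation in integrated form.  The generating function
`S_t = action + ½ ω₀(z_t, g_t z_t)` at a fixed midpoint `Q` has time derivative `K_t(g_t z_t)`.
If `Q` is fixed by the time-`b` map, `S_b` is the action of the trajectory of `Q`. -/
lemma exists_path (hK : Good K a b L) (hle : a ≤ b) (hab : L * (b - a) ≤ 1 / 4)
    (hg : ∀ z, IsTraj K fun t => g t z) (hga : ∀ z, g a z = z) {Q : Esp n} (hQ : g b Q = Q) :
    ∃ c : ℝ → Esp n, Continuous c ∧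
      action K (fun t => g t Q) a b = ∫ t in a..b, K t (c t) := by
  obtain ⟨B, hB⟩ := hK.bdd
  have hB0 : 0 ≤ B := (norm_nonneg _).trans (hB a (left_mem_Icc.2 hle) 0)
  obtain ⟨z, hzL, hz⟩ := exists_midpoint hK hle hab hg hga hB Q
  have hgz : ∀ t ∈ Icc a b, g t (z t) = (2 : ℝ) • Q - z t := fun t ht =>
    eq_sub_of_add_eq' (hz t ht)
  have hzc : Continuous z := by
    refine (LipschitzWith.of_dist_le_mul (K := B.toNNReal) fun t s => ?_).continuous
    rw [dist_eq_norm, Real.dist_eq, Real.coe_toNNReal B hB0]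
    exact hzL t s
  have hcc : Continuous fun t => (2 : ℝ) • Q - z t := continuous_const.sub hzc
  refine ⟨fun t => (2 : ℝ) • Q - z t, hcc, ?_⟩
  set I : ℝ → ℝ := fun t => ∫ r in a..t, K r ((2 : ℝ) • Q - z r) with hI
  have hId : ∀ t, HasDerivAt I (K t ((2 : ℝ) • Q - z t)) t := fun t =>
    ((hK.continuous_comp hcc).integral_hasStrictDerivAt a t).hasDerivAt
  set F : ℝ → ℝ := fun t => action K (fun r => g r (z t)) a t
    + 1 / 2 * omegaL n (z t) (g t (z t)) - I t with hF
  have hspeed : ∀ t ∈ Icc a b, ∀ s ∈ Icc a b, ∀ x, ‖g t x - g s x‖ ≤ B * |t - s| :=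
    fun t ht s hs x => traj_speed hB (hg x) ht hs
  obtain ⟨C, hC⟩ : ∃ C : ℝ, ∀ t ∈ Icc a b, ∀ t' ∈ Icc a b, t ≤ t' →
      |F t' - F t| ≤ C * |t' - t| ^ 2 := by
    refine ⟨(2 * n * B * (2 * B) + 1 / 2 * (2 * n * (3 * B) * B))
      + 12 * n * L * (b - a) * B ^ 2, ?_⟩
    intro t ht t' ht' htt
    have hin : Icc t t' ⊆ Icc a b := Icc_subset_Icc ht.1 ht'.2
    have habs : |t' - t| = t' - t := abs_of_nonneg (by linarith)
    set x := z t with hx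
    set y := z t' with hy
    have hyx : ‖y - x‖ ≤ B * (t' - t) := by rw [← habs]; exact hzL t' t
    have h1 := hK.first_variation hab (hg x) (hg y) ht
    simp only [hga] at h1
    -- Evolution from `t` to `t'` along the trajectory of `y = z t'`; the term `½ ω₀(g_t x, ·)`
    -- subtracts the first-order part of the Liouville integrand.
    have h2 := norm_image_sub_le_of_norm_deriv_le_segment'
      (f := fun s => action K (fun r => g r y) a s + 1 / 2 * omegaL n (g t x) (g s y) - I s)
      (f' := fun s => (K s (g s y) - 1 / 2 * omegaL n (g s y) (hamVF (K s) (g s y)))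
        + 1 / 2 * (omegaL n 0 (g s y) + omegaL n (g t x) (hamVF (K s) (g s y)))
        - K s ((2 : ℝ) • Q - z s))
      (a := t) (b := t')
      (C := (2 * n * B * (2 * B) + 1 / 2 * (2 * n * (3 * B) * B)) * (t' - t))
      (fun s _ => (((hK.hasDerivAt_action (hg y).continuous s).add
        ((hasDerivAt_omegaL (hasDerivAt_const s (g t x)) (hg y s)).const_mul _)).sub
          (hId s)).hasDerivWithinAt)
      (fun s hs => by
        have hs' := Ico_subset_Icc_self hs
        have hsab := hin hs'
        rw [← hgz s hsab]
        have e : (K s (g s y) - 1 / 2 * omegaL n (g s y) (hamVF (K s) (g s y)))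
            + 1 / 2 * (omegaL n 0 (g s y) + omegaL n (g t x) (hamVF (K s) (g s y)))
            - K s (g s (z s))
            = (K s (g s y) - K s (g s (z s)))
              - 1 / 2 * omegaL n (g s y - g t x) (hamVF (K s) (g s y)) := by
          simp only [map_sub, map_zero, sub_apply, zero_apply]
          ring
        have d1 : ‖g s y - g s (z s)‖ ≤ 2 * B * (t' - t) := by
          have := traj_dist hK.lip hab (hg (z s)) (hg y) hsab
          simp only [hga] at this
          have h3 : ‖y - z s‖ ≤ B * (t' - t) := by
            refine (hzL t' s).trans ?_
            rw [abs_of_nonneg (by linarith [hs'.2])]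
            gcongr
            exact hs'.1
          linarith
        have d2 : ‖g s y - g t x‖ ≤ 3 * B * (t' - t) := by
          have h3 : ‖g s y - g s x‖ ≤ 2 * ‖y - x‖ := by
            have := traj_dist hK.lip hab (hg x) (hg y) hsab
            simpa only [hga] using this
          have h4 : ‖g s x - g t x‖ ≤ B * (t' - t) := by
            refine (hspeed s hsab t ht x).trans ?_
            rw [abs_of_nonneg (by linarith [hs'.1])]
            gcongr
            exact hs'.2
          calc ‖g s y - g t x‖ = ‖(g s y - g s x) + (g s x - g t x)‖ := by
                rw [sub_add_sub_cancel]
            _ ≤ ‖g s y - g s x‖ + ‖g s x - g t x‖ := norm_add_le _ _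
            _ ≤ _ := by linarith
        have e1 : |K s (g s y) - K s (g s (z s))| ≤ 2 * n * B * (2 * B * (t' - t)) :=
          (hK.abs_sub_le hB hsab _ _).trans (by gcongr)
        have e2 : |omegaL n (g s y - g t x) (hamVF (K s) (g s y))|
            ≤ 2 * n * (3 * B * (t' - t)) * B := by
          refine (abs_omegaL_le _ _).trans ?_
          have := hB s hsab (g s y)
          have : 0 ≤ t' - t := by linarith
          gcongr
        rw [e, Real.norm_eq_abs]
        refine (abs_sub _ _).trans ?_
        rw [abs_mul, abs_of_pos (by norm_num : (0:ℝ) < 1 / 2)]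
        linarith) t' (right_mem_Icc.2 htt)
    rw [Real.norm_eq_abs] at h2
    have h3 : 12 * n * L * (b - a) * ‖y - x‖ ^ 2
        ≤ 12 * n * L * (b - a) * (B * (t' - t)) ^ 2 := by
      have : 0 ≤ b - a := by linarith
      gcongr
    -- The boundary terms cancel because both trajectories have midpoint `Q`.
    have e : F t' - F t
        = ((action K (fun r => g r y) a t' + 1 / 2 * omegaL n (g t x) (g t' y) - I t')
          - (action K (fun r => g r y) a t + 1 / 2 * omegaL n (g t x) (g t y) - I t))
          + (action K (fun r => g r y) a t - action K (fun r => g r x) a t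
            + 1 / 2 * (omegaL n (g t x) (g t y) - omegaL n x y)) := by
      have c : omegaL n y (g t' y) - omegaL n x (g t x)
          = omegaL n (g t x) (g t' y) - omegaL n x y := by
        rw [hgz t ht, hgz t' ht', ← hx, ← hy]
        simp only [map_sub, map_smul, sub_apply, smul_apply, omegaL_self, smul_eq_mul]
        rw [omegaL_swap y Q, omegaL_swap x Q]
        ring
      simp only [hF, ← hx, ← hy]
      linear_combination (1 / 2) * c
    rw [e, habs]
    refine (abs_add_le _ _).trans ?_
    calc _ ≤ _ := add_le_add h2 (h1.trans h3)
      _ = _ := by ring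
  have hC' : ∀ t ∈ Icc a b, ∀ t' ∈ Icc a b, |F t' - F t| ≤ C * |t' - t| ^ 2 := by
    intro t ht t' ht'
    rcases le_total t t' with h | h
    · exact hC t ht t' ht' h
    · rw [abs_sub_comm, abs_sub_comm t']
      exact hC t' ht' t ht h
  have hconst := eq_of_quadratic (fun t => F (projIcc a b hle t)) |C| (fun t t' => by
    refine (hC' _ (projIcc a b hle t).2 _ (projIcc a b hle t').2).trans ?_
    have := abs_projIcc_sub_projIcc hle (c := t') (d := t)
    rw [Real.norm_eq_abs]
    calc _ ≤ |C| * |(projIcc a b hle t' : ℝ) - projIcc a b hle t| ^ 2 := by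
          gcongr; exact le_abs_self C
      _ ≤ _ := by gcongr) a b
  simp only [projIcc_left, projIcc_right] at hconst
  have ha := left_mem_Icc.2 hle
  have hb := right_mem_Icc.2 hle
  have hza : z a = Q := by
    have := hz a ha
    rw [hga, ← two_smul ℝ (z a)] at this
    exact smul_right_injective _ (two_ne_zero' ℝ) this
  have hzb : z b = Q := by
    have h1 := traj_disp hK.lip hab (hg Q) (hg (z b)) hb
    simp only [hga, hQ, hgz b hb] at h1
    have e : (2 : ℝ) • Q - z b - z b - (Q - Q) = (-2 : ℝ) • (z b - Q) := by module
    rw [e, norm_smul] at h1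
    norm_num at h1
    have : ‖z b - Q‖ = 0 := le_antisymm (by linarith) (norm_nonneg _)
    exact sub_eq_zero.1 (norm_eq_zero.1 this)
  simp only [hF, hza, hzb, hga, hQ, omegaL_self, hI, action,
    intervalIntegral.integral_same] at hconst
  simp only [action]
  linarith

end HamiltonJacobi

/-! ### Smooth families of Hamiltonians -/

section Regularity

open Filter Topology

variable {K : ℝ → ℝ → Esp n → ℝ}

/-- The domain of the parameters `(u, t, x)`. -/
abbrev dom (n : ℕ) : Set (ℝ × ℝ × Esp n) := Ioo (-1 : ℝ) 1 ×ˢ univ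

lemma isOpen_dom : IsOpen (dom n) := isOpen_Ioo.prod isOpen_univ

/-- The inclusion of the space directions among the `(u, t, x)` directions. -/
abbrev spaceIncl (n : ℕ) : Esp n →L[ℝ] ℝ × ℝ × Esp n :=
  (ContinuousLinearMap.inr ℝ ℝ (ℝ × Esp n)).comp (ContinuousLinearMap.inr ℝ ℝ (Esp n))

lemma hasFDerivAt_slice {F : Type*} [NormedAddCommGroup F] [NormedSpace ℝ F]
    {f : ℝ × ℝ × Esp n → F} {u t : ℝ} {x : Esp n} (hf : DifferentiableAt ℝ f (u, t, x)) :
    HasFDerivAt (fun y => f (u, t, y)) ((fderiv ℝ f (u, t, x)).comp (spaceIncl n)) x := by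
  have h : HasFDerivAt (fun y : Esp n => ((u, t, y) : ℝ × ℝ × Esp n)) (spaceIncl n) x :=
    (hasFDerivAt_prodMk_right u (t, x)).comp x (hasFDerivAt_prodMk_right t x)
  exact hf.hasFDerivAt.comp x h

/-- Regularity of a smooth family of Hamiltonians in the joint variable `(u, t, x)`. -/
lemma regularity (hK : ContDiffOn ℝ (⊤ : ℕ∞) (fun q : ℝ × ℝ × Esp n => K q.1 q.2.1 q.2.2) (dom n)) :
    (∀ u ∈ Ioo (-1 : ℝ) 1, ∀ t, Differentiable ℝ (K u t)) ∧
    ContinuousOn (fun q : ℝ × ℝ × Esp n => hamVF (K q.1 q.2.1) q.2.2) (dom n) ∧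
    (∀ u ∈ Ioo (-1 : ℝ) 1, ∀ t, Differentiable ℝ (hamVF (K u t))) ∧
    ContinuousOn (fun q : ℝ × ℝ × Esp n => fderiv ℝ (hamVF (K q.1 q.2.1)) q.2.2) (dom n) := by
  set f : ℝ × ℝ × Esp n → ℝ := fun q => K q.1 q.2.1 q.2.2 with hf
  have hmem : ∀ {u t : ℝ} {x : Esp n}, u ∈ Ioo (-1 : ℝ) 1 → ((u, t, x) : ℝ × ℝ × Esp n) ∈ dom n :=
    fun hu => ⟨hu, mem_univ _⟩
  have hsl : ∀ q ∈ dom n, HasFDerivAt (K q.1 q.2.1) ((fderiv ℝ f q).comp (spaceIncl n)) q.2.2 :=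
    fun q hq => hasFDerivAt_slice (f := f)
      ((hK.contDiffAt (isOpen_dom.mem_nhds hq)).differentiableAt (by simp))
  have hdf : ContDiffOn ℝ (⊤ : ℕ∞) (fderiv ℝ f) (dom n) :=
    hK.fderiv_of_isOpen isOpen_dom (by simp)
  set X : ℝ × ℝ × Esp n → Esp n := fun q =>
    (fun i => -(fderiv ℝ f q (spaceIncl n (0, Pi.single i 1))),
     fun i => fderiv ℝ f q (spaceIncl n (Pi.single i 1, 0))) with hX
  have hXs : ContDiffOn ℝ (⊤ : ℕ∞) X (dom n) :=
    (contDiffOn_pi.2 fun i => (hdf.clm_apply contDiffOn_const).neg).prodMk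
      (contDiffOn_pi.2 fun i => hdf.clm_apply contDiffOn_const)
  have hXe : ∀ q ∈ dom n, hamVF (K q.1 q.2.1) q.2.2 = X q := by
    intro q hq
    simp only [hamVF, (hsl q hq).fderiv, hX, ContinuousLinearMap.comp_apply]
  have hXsl : ∀ q ∈ dom n,
      HasFDerivAt (hamVF (K q.1 q.2.1)) ((fderiv ℝ X q).comp (spaceIncl n)) q.2.2 := by
    intro q hq
    have h := hasFDerivAt_slice (f := X) (u := q.1) (t := q.2.1) (x := q.2.2)
      ((hXs.contDiffAt (isOpen_dom.mem_nhds hq)).differentiableAt (by simp))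
    have e : hamVF (K q.1 q.2.1) = fun y => X (q.1, q.2.1, y) :=
      funext fun y => hXe (q.1, q.2.1, y) (hmem hq.1)
    rw [e]
    exact h
  refine ⟨fun u hu t x => (hsl (u, t, x) (hmem hu)).differentiableAt,
    hXs.continuousOn.congr hXe, fun u hu t x => (hXsl (u, t, x) (hmem hu)).differentiableAt, ?_⟩
  have hdX : ContDiffOn ℝ (⊤ : ℕ∞) (fderiv ℝ X) (dom n) :=
    hXs.fderiv_of_isOpen isOpen_dom (by simp)
  exact (hdX.continuousOn.clm_comp continuousOn_const).congr fun q hq => (hXsl q hq).fderiv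

lemma fderiv_hamVF_eq_zero {F : Esp n → ℝ} {C : Set (Esp n)} (hC : IsClosed C)
    (h : ∀ x, x ∉ C → F x = 0) {x : Esp n} (hx : x ∉ C) : fderiv ℝ (hamVF F) x = 0 := by
  have : hamVF F =ᶠ[𝓝 x] fun _ => 0 := by
    filter_upwards [hC.isOpen_compl.mem_nhds hx] with y hy using hamVF_eq_zero_of_notMem hC h hy
  rw [this.fderiv_eq]
  simp

lemma good_of_bound
    (hK : ContDiffOn ℝ (⊤ : ℕ∞) (fun q : ℝ × ℝ × Esp n => K q.1 q.2.1 q.2.2) (dom n))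
    {C : Set (Esp n)} (hC : IsCompact C) (hCK : ∀ u ∈ Ioo (-1 : ℝ) 1, ∀ t x, x ∉ C → K u t x = 0)
    {u : ℝ} (hu : u ∈ Ioo (-1 : ℝ) 1) {L : ℝ≥0} {a b : ℝ}
    (hL : ∀ t ∈ Icc a b, ∀ x, ‖fderiv ℝ (hamVF (K u t)) x‖ ≤ L) : Good (K u) a b L := by
  obtain ⟨h1, h2, h3, -⟩ := regularity hK
  have hin : Continuous fun q : ℝ × Esp n => ((u, q) : ℝ × ℝ × Esp n) := by fun_prop
  have hmem : ∀ q : ℝ × Esp n, ((u, q) : ℝ × ℝ × Esp n) ∈ dom n := fun q => ⟨hu, mem_univ _⟩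
  have hcX : Continuous fun q : ℝ × Esp n => hamVF (K u q.1) q.2 := h2.comp_continuous hin hmem
  refine ⟨hK.continuousOn.comp_continuous hin hmem, hcX, h1 u hu,
    fun t ht => lipschitzWith_of_nnnorm_fderiv_le (h3 u hu t) (hL t ht), ?_, C, hC, hCK u hu⟩
  obtain ⟨B, hB⟩ := (isCompact_Icc.prod hC).exists_bound_of_continuousOn
    (s := Icc a b ×ˢ C) hcX.continuousOn
  refine ⟨max B 0, fun t ht x => ?_⟩
  by_cases hx : x ∈ C
  · exact (hB (t, x) ⟨ht, hx⟩).trans (le_max_left _ _)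
  · rw [hamVF_eq_zero_of_notMem hC.isClosed (hCK u hu t) hx]
    simp

lemma exists_bound
    (hK : ContDiffOn ℝ (⊤ : ℕ∞) (fun q : ℝ × ℝ × Esp n => K q.1 q.2.1 q.2.2) (dom n))
    {C : Set (Esp n)} (hC : IsCompact C)
    (hCK : ∀ u ∈ Ioo (-1 : ℝ) 1, ∀ t x, x ∉ C → K u t x = 0) :
    ∃ L : ℝ≥0, ∀ t ∈ Icc (0 : ℝ) 1, ∀ x, ‖fderiv ℝ (hamVF (K 0 t)) x‖ ≤ L := by
  have h0 : (0 : ℝ) ∈ Ioo (-1 : ℝ) 1 := by norm_num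
  obtain ⟨B, hB⟩ := (isCompact_singleton (x := (0 : ℝ)).prod
    (isCompact_Icc (a := (0 : ℝ)) (b := 1) |>.prod hC)).exists_bound_of_continuousOn
    ((regularity hK).2.2.2.mono (by
      rintro ⟨u, t, x⟩ ⟨hu, -⟩
      rw [mem_singleton_iff] at hu
      exact ⟨hu ▸ h0, mem_univ _⟩))
  refine ⟨B.toNNReal, fun t ht x => ?_⟩
  by_cases hx : x ∈ C
  · exact (hB (0, t, x) ⟨rfl, ht, hx⟩).trans (Real.le_coe_toNNReal B)
  · rw [fderiv_hamVF_eq_zero hC.isClosed (hCK 0 h0 t) hx]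
    simp

/-- Lipschitz bounds at `u = 0` persist, up to an additive constant, for small `u`. -/
lemma eventually_bound
    (hK : ContDiffOn ℝ (⊤ : ℕ∞) (fun q : ℝ × ℝ × Esp n => K q.1 q.2.1 q.2.2) (dom n))
    {C : Set (Esp n)} (hC : IsCompact C)
    (hCK : ∀ u ∈ Ioo (-1 : ℝ) 1, ∀ t x, x ∉ C → K u t x = 0) {L : ℝ≥0}
    (hL : ∀ t ∈ Icc (0 : ℝ) 1, ∀ x, ‖fderiv ℝ (hamVF (K 0 t)) x‖ ≤ L) :
    ∃ δ > 0, ∀ u ∈ Ioo (-1 : ℝ) 1, |u| < δ → ∀ t ∈ Icc (0 : ℝ) 1, ∀ x,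
      ‖fderiv ℝ (hamVF (K u t)) x‖ ≤ (L + 1 : ℝ≥0) := by
  have h0 : (0 : ℝ) ∈ Ioo (-1 : ℝ) 1 := by norm_num
  have hcont := (regularity hK).2.2.2
  have hev : ∀ᶠ u in 𝓝 (0 : ℝ), ∀ q ∈ Icc (0 : ℝ) 1 ×ˢ C,
      ‖fderiv ℝ (hamVF (K u q.1)) q.2‖ < L + 1 := by
    refine ((isCompact_Icc (a := (0 : ℝ)) (b := 1)).prod hC).eventually_forall_of_forall_eventually
      (P := fun (u : ℝ) (q : ℝ × Esp n) => ‖fderiv ℝ (hamVF (K u q.1)) q.2‖ < L + 1)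
      fun q hq => ?_
    have hc : ContinuousAt (fun q : ℝ × ℝ × Esp n => ‖fderiv ℝ (hamVF (K q.1 q.2.1)) q.2.2‖)
        (0, q) := (hcont.continuousAt (isOpen_dom.mem_nhds ⟨h0, mem_univ _⟩)).norm
    exact hc.eventually_lt continuousAt_const
      (lt_of_le_of_lt (hL q.1 hq.1 q.2) (by simp))
  obtain ⟨δ, hδ, hball⟩ := Metric.eventually_nhds_iff.1 hev
  refine ⟨δ, hδ, fun u hu huδ t ht x => ?_⟩
  by_cases hx : x ∈ C
  · have := hball (y := u) (by simpa [Real.dist_eq] using huδ) (t, x) ⟨ht, hx⟩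
    push_cast
    exact this.le
  · rw [fderiv_hamVF_eq_zero hC.isClosed (hCK u hu t) hx, norm_zero]
    exact NNReal.coe_nonneg _

end Regularity

/-! ### The total variation -/

section TotVar

variable {K : ℝ → Esp n → ℝ}

/-- The values of a compactly supported Hamiltonian are those on a fixed compact set. -/
lemma exists_compact_range (hn : 0 < n) (hK : IsCompactlySupported K) :
    ∃ C : Set (Esp n), IsCompact C ∧ ∀ t, range (K t) = K t '' C := by
  obtain ⟨C, hC, hCK⟩ := hK
  obtain ⟨z, hz⟩ := exists_notMem hn hC
  refine ⟨insert z C, hC.insert z, fun t => Subset.antisymm ?_ (image_subset_range _ _)⟩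
  rintro _ ⟨x, rfl⟩
  by_cases hx : x ∈ C
  · exact ⟨x, Or.inr hx, rfl⟩
  · exact ⟨z, Or.inl rfl, by rw [hCK t z hz, hCK t x hx]⟩

lemma continuous_totVar (hn : 0 < n) (hK : IsCompactlySupported K)
    (hc : Continuous fun q : ℝ × Esp n => K q.1 q.2) : Continuous fun t => totVar (K t) := by
  obtain ⟨C, hC, hr⟩ := exists_compact_range hn hK
  simp only [totVar, hr]
  exact (hC.continuous_sSup (f := K) hc).sub (hC.continuous_sInf (f := K) hc)

lemma bdd_range (hn : 0 < n) (hK : IsCompactlySupported K)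
    (hc : Continuous fun q : ℝ × Esp n => K q.1 q.2) (t : ℝ) :
    BddAbove (range (K t)) ∧ BddBelow (range (K t)) := by
  obtain ⟨C, hC, hr⟩ := exists_compact_range hn hK
  rw [hr]
  have h : ContinuousOn (K t) C := (hc.comp (continuous_const.prodMk continuous_id)).continuousOn
  exact ⟨(hC.image_of_continuousOn h).bddAbove, (hC.image_of_continuousOn h).bddBelow⟩

/-- In dimension zero every total variation vanishes. -/
lemma pos_of_totVar_pos {F : Esp n → ℝ} (h : 0 < totVar F) : 0 < n := by
  rcases Nat.eq_zero_or_pos n with rfl | hn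
  · have : range F = {F 0} := by
      ext y
      simp only [mem_range, mem_singleton_iff]
      exact ⟨fun ⟨x, hx⟩ => by rw [← hx, Subsingleton.elim x 0], fun hy => ⟨0, hy.symm⟩⟩
    simp [totVar, this] at h
  · exact hn

end TotVar

end HoferGeodesic

open HoferGeodesic

/-- (Theorem 1.2 of the paper, for `M = ℝ^{2n}`.)
If a regular compactly supported Hamiltonian path on `ℝ^{2n}` has a fixed maximum and a
fixed minimum at each moment, then it is a geodesic of the Hofer length: every
`s ∈ [0,1]` has a closed connected neighbourhood `[a,b] ⊆ [0,1]` on which the path is a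
stable geodesic (a local minimum of the length among homotopic paths with the same
endpoints). -/
theorem statement0 {n : ℕ} (H : ℝ → Esp n → ℝ)
    (hHsm : ContDiff ℝ (⊤ : ℕ∞) fun q : ℝ × Esp n => H q.1 q.2)
    (hHsupp : IsCompactlySupported H)
    (φ : ℝ → Esp n → Esp n) (hφ : IsHamIsotopyOf H φ)
    (hreg : ∀ t ∈ Icc (0:ℝ) 1, 0 < totVar (H t))
    (hquasi : ∀ s ∈ Icc (0:ℝ) 1, ∃ N : Set ℝ,
      N ⊆ Icc (0:ℝ) 1 ∧ IsClosed N ∧ IsConnected N ∧ N ∈ nhdsWithin s (Icc (0:ℝ) 1) ∧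
      ∃ P p : Esp n, ∀ t ∈ N,
        H t P = sSup (Set.range (H t)) ∧ H t p = sInf (Set.range (H t))) :
    ∀ s ∈ Icc (0:ℝ) 1, ∃ a b : ℝ, a < b ∧ Icc a b ⊆ Icc (0:ℝ) 1 ∧
      Icc a b ∈ nhdsWithin s (Icc (0:ℝ) 1) ∧
      ∀ K : ℝ → ℝ → Esp n → ℝ,
        ContDiffOn ℝ (⊤ : ℕ∞) (fun q : ℝ × ℝ × Esp n => K q.1 q.2.1 q.2.2)
          (Ioo (-1:ℝ) 1 ×ˢ (univ : Set (ℝ × Esp n))) →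
        (∃ C : Set (Esp n), IsCompact C ∧ ∀ u ∈ Ioo (-1:ℝ) 1, ∀ t x, x ∉ C → K u t x = 0) →
        (∀ t x, K 0 t x = H t x) →
        ∀ ψ : ℝ → ℝ → Esp n → Esp n,
          (∀ u ∈ Ioo (-1:ℝ) 1, ∀ x, ψ u a x = φ a x) →
          (∀ u ∈ Ioo (-1:ℝ) 1, ∀ x t,
            HasDerivAt (fun r => ψ u r x) (hamVF (K u t) (ψ u t x)) t) →
          (∀ u ∈ Ioo (-1:ℝ) 1, ∀ x, ψ u b x = φ b x) →
          ∃ δ > 0, ∀ u ∈ Ioo (-1:ℝ) 1, |u| < δ →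
            (∫ t in a..b, totVar (H t)) ≤ ∫ t in a..b, totVar (K u t) := by
  intro s hs
  have hn : 0 < n := pos_of_totVar_pos (hreg s hs)
  obtain ⟨N, -, -, -, hNs, P, p, hPp⟩ := hquasi s hs
  obtain ⟨CH, hCH, hCHz⟩ := id hHsupp
  -- `H` as a family constant in `u`.
  have hHfam : ContDiffOn ℝ (⊤ : ℕ∞)
      (fun q : ℝ × ℝ × Esp n => (fun _ : ℝ => H) q.1 q.2.1 q.2.2) (dom n) :=
    (hHsm.comp contDiff_snd).contDiffOn
  have h0 : (0 : ℝ) ∈ Ioo (-1 : ℝ) 1 := by norm_num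
  obtain ⟨L, hL⟩ := exists_bound hHfam hCH (fun _ _ => hCHz)
  obtain ⟨ε, hε, hεN⟩ := Metric.mem_nhdsWithin_iff.1 hNs
  -- The radius makes `(L + 1) * (b - a) ≤ 1 / 4`, where `L + 1` bounds the Lipschitz constants
  -- of the vector fields of `K u` for small `u`.
  obtain ⟨ρ, hρ, hρε, hρL⟩ : ∃ ρ : ℝ, 0 < ρ ∧ ρ < ε ∧ ((L + 1 : NNReal) : ℝ) * (2 * ρ) ≤ 1 / 4 := by
    have hL1 : (0 : ℝ) < ((L + 1 : NNReal) : ℝ) := by positivity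
    refine ⟨min (ε / 2) (1 / (8 * ((L + 1 : NNReal) : ℝ))), by positivity,
      (min_le_left _ _).trans_lt (by linarith), ?_⟩
    calc _ ≤ ((L + 1 : NNReal) : ℝ) * (2 * (1 / (8 * ((L + 1 : NNReal) : ℝ)))) := by
          gcongr; exact min_le_right _ _
      _ = 1 / 4 := by field_simp; norm_num
  obtain ⟨a, ha⟩ : ∃ a, a = max 0 (s - ρ) := ⟨_, rfl⟩
  obtain ⟨b, hb⟩ : ∃ b, b = min 1 (s + ρ) := ⟨_, rfl⟩
  have hab : a < b := by
    rw [ha, hb, max_lt_iff, lt_min_iff, lt_min_iff]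
    refine ⟨⟨one_pos, ?_⟩, ?_, ?_⟩ <;> linarith [hs.1, hs.2]
  have hle := hab.le
  have ha0 : 0 ≤ a := ha ▸ le_max_left _ _
  have hb1 : b ≤ 1 := hb ▸ min_le_left _ _
  have has : s - ρ ≤ a := ha ▸ le_max_right _ _
  have hbs : b ≤ s + ρ := hb ▸ min_le_right _ _
  have hsub : Icc a b ⊆ Icc (0 : ℝ) 1 := Icc_subset_Icc ha0 hb1
  have hsN : ∀ t ∈ Icc a b, t ∈ N := fun t ht => hεN ⟨by
    rw [Metric.mem_ball, Real.dist_eq, abs_lt]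
    constructor <;> linarith [ht.1, ht.2], hsub ht⟩
  have hshort : ((L + 1 : NNReal) : ℝ) * (b - a) ≤ 1 / 4 := by
    refine le_trans ?_ hρL
    gcongr
    linarith
  refine ⟨a, b, hab, hsub, ?_, ?_⟩
  · refine Metric.mem_nhdsWithin_iff.2 ⟨ρ, hρ, fun t ht => ?_⟩
    have h1 := ht.1
    rw [Metric.mem_ball, Real.dist_eq, abs_lt] at h1
    rw [ha, hb]
    exact ⟨max_le ht.2.1 (by linarith), le_min ht.2.2 (by linarith)⟩
  rintro K hK ⟨C, hC, hCK⟩ hK0 ψ hψa hψ hψb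
  have hK0' : ∀ t, K 0 t = H t := fun t => funext (hK0 t)
  obtain ⟨δ, hδ, hδL⟩ := eventually_bound (L := L) hK hC hCK
    (fun t ht x => by rw [hK0']; exact hL t ht x)
  refine ⟨δ, hδ, fun u hu huδ => ?_⟩
  have hGK : Good (K u) a b (L + 1) :=
    good_of_bound hK hC hCK hu (fun t ht x => hδL u hu huδ t (hsub ht) x)
  have hGH : Good H a b (L + 1) := good_of_bound hHfam hCH (fun _ _ => hCHz) h0
    (fun t ht x => (hL t (hsub ht) x).trans (by simp))
  have hGH1 : Good H 0 1 L := good_of_bound hHfam hCH (fun _ _ => hCHz) h0 hL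
  -- Both flows are restarted at time `a`, using that `φ a` is onto.
  have hsurj : Function.Surjective (φ a) := surj_flow
    (fun t ht => hGH1.lip t ⟨ht.1, ht.2.trans (hle.trans hb1)⟩) ha0 (fun x t => hφ.2 x t) hφ.1
  choose σ hσ using hsurj
  obtain ⟨g, hg⟩ : ∃ g : ℝ → Esp n → Esp n, ∀ t z, g t z = ψ u t (σ z) := ⟨_, fun _ _ => rfl⟩
  obtain ⟨h, hh⟩ : ∃ h : ℝ → Esp n → Esp n, ∀ t z, h t z = φ t (σ z) := ⟨_, fun _ _ => rfl⟩
  have hgT : ∀ z, IsTraj (K u) fun t => g t z := fun z t => by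
    simp only [hg]; exact hψ u hu (σ z) t
  have hhT : ∀ z, IsTraj H fun t => h t z := fun z t => by
    simp only [hh]; exact hφ.2 (σ z) t
  have hga : ∀ z, g a z = z := fun z => by rw [hg, hψa u hu, hσ]
  have hha : ∀ z, h a z = z := fun z => by rw [hh, hσ]
  have hgb : ∀ z, g b z = h b z := fun z => by rw [hg, hh, hψb u hu]
  -- At a common critical point `Q` of the `H t`, the integral of `H t Q` is the action of the
  -- constant trajectory, hence also the integral of `K u t` along a suitable path.
  have main : ∀ Q : Esp n, (∀ t ∈ Icc a b, fderiv ℝ (H t) Q = 0) →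
      ∃ c : ℝ → Esp n, Continuous c ∧ ∫ t in a..b, H t Q = ∫ t in a..b, K u t (c t) := by
    intro Q hQ
    have hX : ∀ t ∈ Icc a b, hamVF (H t) Q = 0 := fun t ht => hamVF_eq_zero (hQ t ht)
    have hfix : ∀ t ∈ Icc a b, h t Q = Q := fun t ht => by
      have := hGH.traj_const (hhT Q) (fun t ht => by rw [hha]; exact hX t ht) ht
      simpa only [hha] using this
    obtain ⟨c, hc, hcA⟩ := exists_path hGK hle hshort hgT hga (Q := Q)
      (by rw [hgb, hfix b (right_mem_Icc.2 hle)])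
    refine ⟨c, hc, ?_⟩
    rw [← hcA, action_eq hn hle hGK hGH hshort hgT hhT hga hha hgb, action]
    refine intervalIntegral.integral_congr fun t ht => ?_
    rw [uIcc_of_le hle] at ht
    simp [hfix t ht, hX t ht]
  have hbH := bdd_range hn hHsupp hGH.cont
  have hbK := bdd_range hn hGK.supp hGK.cont
  obtain ⟨c, hc, hcP⟩ := main P fun t ht => by
    refine IsLocalMax.fderiv_eq_zero (Filter.Eventually.of_forall fun x => ?_)
    rw [(hPp t (hsN t ht)).1]
    exact le_csSup (hbH t).1 (mem_range_self x)
  obtain ⟨c', hc', hcp⟩ := main p fun t ht => by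
    refine IsLocalMin.fderiv_eq_zero (Filter.Eventually.of_forall fun x => ?_)
    rw [(hPp t (hsN t ht)).2]
    exact csInf_le (hbH t).2 (mem_range_self x)
  have hH1 := hGH.continuous_comp (continuous_const (y := P))
  have hH2 := hGH.continuous_comp (continuous_const (y := p))
  have hK1 := hGK.continuous_comp hc
  have hK2 := hGK.continuous_comp hc'
  calc (∫ t in a..b, totVar (H t)) = ∫ t in a..b, (H t P - H t p) := by
        refine intervalIntegral.integral_congr fun t ht => ?_
        rw [uIcc_of_le hle] at ht
        simp only [totVar, (hPp t (hsN t ht)).1, (hPp t (hsN t ht)).2]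
    _ = ∫ t in a..b, (K u t (c t) - K u t (c' t)) := by
        rw [intervalIntegral.integral_sub (hH1.intervalIntegrable _ _)
          (hH2.intervalIntegrable _ _), hcP, hcp, intervalIntegral.integral_sub
          (hK1.intervalIntegrable _ _) (hK2.intervalIntegrable _ _)]
    _ ≤ ∫ t in a..b, totVar (K u t) := by
        refine intervalIntegral.integral_mono_on hle ((hK1.sub hK2).intervalIntegrable _ _)
          ((continuous_totVar hn hGK.supp hGK.cont).intervalIntegrable _ _) fun t _ => ?_
        exact sub_le_sub (le_csSup (hbK t).1 (mem_range_self _))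
          (csInf_le (hbK t).2 (mem_range_self _))
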